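/- The set of 3×3 real orthogonal matrices A such that A maps the eight-point set {T'_1,T'_2,T'_3,T'_4,T_5,T_6,T_7,T_8} onto itself and maps the ten-point set {S_1,S_2,S_3,S_4,S_5,S_6,S_2',S_3',S_4',S_5'} onto itself is exactly the group G' generated by σ'_2 and σ', and this set has exactly 16 elements. (Thus the symmetry group of the pseudo-deltoidal icositetrahedron has order 16.) -/

import Mathlib

open Matrix

/-- `τ = (2√2+1)/7`. -/
noncomputable def tau : ℝ := (2 * Real.sqrt 2 + 1) / 7

/-- The eight points `T'_1, T'_2, T'_3, T'_4, T_5, T_6, T_7, T_8` of the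
pseudo-deltoidal icositetrahedron (indexed by `Fin 8`). -/
noncomputable def P8 : Fin 8 → Fin 3 → ℝ :=
  ![tau • ![Real.sqrt 2, 0, 1], tau • ![0, Real.sqrt 2, 1],
    tau • ![-Real.sqrt 2, 0, 1], tau • ![0, -Real.sqrt 2, 1],
    tau • ![1, 1, -1], tau • ![-1, 1, -1], tau • ![-1, -1, -1], tau • ![1, -1, -1]]

/-- The ten points `S_1, …, S_6, S_2', S_3', S_4', S_5'` (indexed by `Fin 10`). -/
noncomputable def P10 : Fin 10 → Fin 3 → ℝ :=
  ![![0, 0, 1], ![1, 0, 0], ![0, 1, 0], ![-1, 0, 0], ![0, -1, 0], ![0, 0, -1],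
    (1 / Real.sqrt 2) • ![1, -1, 0], (1 / Real.sqrt 2) • ![1, 1, 0],
    (1 / Real.sqrt 2) • ![-1, 1, 0], (1 / Real.sqrt 2) • ![-1, -1, 0]]

/-- The matrix `σ'₂` with rows `(1/√2, 1/√2, 0), (−1/√2, 1/√2, 0), (0, 0, −1)`. -/
noncomputable def sigma2' : Matrix (Fin 3) (Fin 3) ℝ :=
  !![1 / Real.sqrt 2, 1 / Real.sqrt 2, 0;
     -(1 / Real.sqrt 2), 1 / Real.sqrt 2, 0;
     0, 0, -1]

/-- The matrix `σ' = diag(1, −1, 1)`. -/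
def sigma' : Matrix (Fin 3) (Fin 3) ℝ := !![1, 0, 0; 0, -1, 0; 0, 0, 1]

/-- `G'`: the subgroup of `GL(3,ℝ)` generated by `σ'₂` and `σ'`. -/
noncomputable def G' : Subgroup (GL (Fin 3) ℝ) :=
  Subgroup.closure {g | (↑g : Matrix (Fin 3) (Fin 3) ℝ) = sigma2' ∨
    (↑g : Matrix (Fin 3) (Fin 3) ℝ) = sigma'}

/-- The orthogonal matrices mapping each of the two point sets onto itself. -/
noncomputable def symSet : Set (Matrix (Fin 3) (Fin 3) ℝ) :=
  {A | Aᵀ * A = 1 ∧ A.mulVec '' Set.range P8 = Set.range P8 ∧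
    A.mulVec '' Set.range P10 = Set.range P10}


lemma sq_c : (1 / Real.sqrt 2) * (1 / Real.sqrt 2) = 1 / 2 := by
  have h : Real.sqrt 2 * Real.sqrt 2 = 2 := Real.mul_self_sqrt (by norm_num)
  have h0 : Real.sqrt 2 ≠ 0 := by positivity
  field_simp
  nlinarith

lemma c_sqrt : (1 / Real.sqrt 2) * Real.sqrt 2 = 1 := by
  have h0 : Real.sqrt 2 ≠ 0 := by positivity
  field_simp

lemma sqrt_eq : Real.sqrt 2 = 2 * (1 / Real.sqrt 2) := by
  have h : Real.sqrt 2 * Real.sqrt 2 = 2 := Real.mul_self_sqrt (by norm_num)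
  have h0 : Real.sqrt 2 ≠ 0 := by positivity
  field_simp
  nlinarith

lemma c_pos : 0 < 1 / Real.sqrt 2 := by positivity

lemma c_lt : 1 / Real.sqrt 2 < 1 := by
  nlinarith [sq_c, c_pos]

lemma tau_pos : 0 < tau := by unfold tau; positivity

lemma image_of_perm {n : ℕ} (A : Matrix (Fin 3) (Fin 3) ℝ) (P : Fin n → Fin 3 → ℝ)
    (π : Fin n → Fin n) (hπ : Function.Surjective π) (h : ∀ i, A *ᵥ P i = P (π i)) :
    A.mulVec '' Set.range P = Set.range P := by
  rw [← Set.range_comp, ← hπ.range_comp P]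
  congr 1
  funext i
  exact h i

lemma sigma2_mem : sigma2' ∈ symSet := by
  have h1 := sq_c
  have h2 := sqrt_eq
  refine ⟨?_, ?_, ?_⟩
  · unfold sigma2'
    generalize 1 / Real.sqrt 2 = c at *
    ext i j
    fin_cases i <;> fin_cases j <;>
      simp [Matrix.mul_apply, Fin.sum_univ_three] <;> linarith
  · refine image_of_perm _ _ ![7,4,5,6,0,1,2,3] (by decide) ?_
    unfold sigma2' P8
    generalize 1 / Real.sqrt 2 = c at *
    rw [h2]
    intro i
    fin_cases i <;> (ext j; fin_cases j <;> simp <;>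
      first
        | linear_combination (2 * tau) * h1
        | linear_combination (-2 * tau) * h1
        | ring)
  · refine image_of_perm _ _ ![5,6,7,8,9,0,4,1,2,3] (by decide) ?_
    unfold sigma2' P10
    generalize 1 / Real.sqrt 2 = c at *
    intro i
    fin_cases i <;> simp <;> (try (ext j; fin_cases j <;> simp <;> linarith))

lemma sigma_mem : sigma' ∈ symSet := by
  refine ⟨?_, ?_, ?_⟩
  · unfold sigma'
    ext i j
    fin_cases i <;> fin_cases j <;> simp [Matrix.mul_apply, Fin.sum_univ_three]
  · refine image_of_perm _ _ ![0,3,2,1,7,6,5,4] (by decide) ?_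
    unfold sigma' P8
    intro i
    fin_cases i <;> (ext j; fin_cases j <;> simp)
  · refine image_of_perm _ _ ![0,1,4,3,2,5,7,6,9,8] (by decide) ?_
    unfold sigma' P10
    intro i
    fin_cases i <;> (ext j; fin_cases j <;> simp)

lemma one_mem_sym : (1 : Matrix (Fin 3) (Fin 3) ℝ) ∈ symSet := by
  refine ⟨by simp, ?_, ?_⟩ <;>
  exact image_of_perm _ _ id Function.surjective_id (by simp)

lemma image_mul (A B : Matrix (Fin 3) (Fin 3) ℝ) (S : Set (Fin 3 → ℝ)) :
    (A * B).mulVec '' S = A.mulVec '' (B.mulVec '' S) := by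
  rw [Set.image_image]
  simp [Matrix.mulVec_mulVec]

lemma mul_mem_sym {A B : Matrix (Fin 3) (Fin 3) ℝ} (hA : A ∈ symSet) (hB : B ∈ symSet) :
    A * B ∈ symSet := by
  obtain ⟨a1, a2, a3⟩ := hA
  obtain ⟨b1, b2, b3⟩ := hB
  refine ⟨?_, ?_, ?_⟩
  · rw [transpose_mul, Matrix.mul_assoc, ← Matrix.mul_assoc Aᵀ, a1, Matrix.one_mul, b1]
  · rw [image_mul, b2, a2]
  · rw [image_mul, b3, a3]

lemma transpose_mem_sym {A : Matrix (Fin 3) (Fin 3) ℝ} (hA : A ∈ symSet) : Aᵀ ∈ symSet := by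
  obtain ⟨a1, a2, a3⟩ := hA
  have a4 : A * Aᵀ = 1 := mul_eq_one_comm.mp a1
  refine ⟨by simpa using a4, ?_, ?_⟩
  · conv_lhs => rw [← a2]
    rw [← image_mul, a1]; simp
  · conv_lhs => rw [← a3]
    rw [← image_mul, a1]; simp

/-- The subgroup of `GL(3,ℝ)` of matrices in `symSet`. -/
def symGroup : Subgroup (GL (Fin 3) ℝ) where
  carrier := {g | (g : Matrix (Fin 3) (Fin 3) ℝ) ∈ symSet}
  mul_mem' := by
    intro a b ha hb
    simpa using mul_mem_sym ha hb
  one_mem' := by simpa using one_mem_sym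
  inv_mem' := by
    intro a ha
    have h : ((a⁻¹ : GL (Fin 3) ℝ) : Matrix (Fin 3) (Fin 3) ℝ)
        = (a : Matrix (Fin 3) (Fin 3) ℝ)ᵀ := by
      rw [Matrix.coe_units_inv]
      exact Matrix.inv_eq_left_inv ha.1
    change ((a⁻¹ : GL (Fin 3) ℝ) : Matrix (Fin 3) (Fin 3) ℝ) ∈ symSet
    rw [h]
    exact transpose_mem_sym ha

lemma G_le : G' ≤ symGroup := by
  unfold G'
  rw [Subgroup.closure_le]
  rintro g (h | h)
  · change (g : Matrix (Fin 3) (Fin 3) ℝ) ∈ symSet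
    rw [h]; exact sigma2_mem
  · change (g : Matrix (Fin 3) (Fin 3) ℝ) ∈ symSet
    rw [h]; exact sigma_mem

lemma pow_mem_sym (k : ℕ) : sigma2' ^ k ∈ symSet := by
  induction k with
  | zero => simpa using one_mem_sym
  | succ k ih => rw [pow_succ]; exact mul_mem_sym ih sigma2_mem

/-- The eight horizontal points, in the order of the powers of `sigma2'`. -/
noncomputable def hvec : Fin 8 → Fin 3 → ℝ :=
  ![![1, 0, 0], (1 / Real.sqrt 2) • ![1, -1, 0], ![0, -1, 0], (1 / Real.sqrt 2) • ![-1, -1, 0],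
    ![-1, 0, 0], (1 / Real.sqrt 2) • ![-1, 1, 0], ![0, 1, 0], (1 / Real.sqrt 2) • ![1, 1, 0]]

lemma sigma2_hvec (k : Fin 8) : sigma2' *ᵥ hvec k = hvec (k + 1) := by
  have h1 := sq_c
  unfold sigma2' hvec
  generalize 1 / Real.sqrt 2 = c at *
  fin_cases k <;> simp <;> (try (ext j; fin_cases j <;> simp <;> linarith))

lemma pow_hvec (k : Fin 8) : sigma2' ^ (k : ℕ) *ᵥ ![1, 0, 0] = hvec k := by
  have h0 : (![1, 0, 0] : Fin 3 → ℝ) = hvec 0 := by simp [hvec]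
  have key : ∀ n : ℕ, sigma2' ^ n *ᵥ hvec 0 = hvec (Fin.ofNat 8 n) := by
    intro n
    induction n with
    | zero => simp
    | succ n ih =>
      rw [pow_succ', ← Matrix.mulVec_mulVec, ih, sigma2_hvec]
      congr 1
      ext; simp [Fin.val_add]
  rw [h0, key]
  congr 1
  ext; simp

lemma hvec_inj : Function.Injective hvec := by
  have h2 := c_pos
  have h3 := c_lt
  intro i j h
  have e0 := congrFun h 0
  have e1 := congrFun h 1
  unfold hvec at e0 e1
  generalize 1 / Real.sqrt 2 = c at *
  fin_cases i <;> fin_cases j <;> first | rfl | (exfalso; simp at e0 e1; done) | (exfalso; simp at e0 e1; linarith)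

lemma fix_e1 {B : Matrix (Fin 3) (Fin 3) ℝ} (hB : B ∈ symSet) (h : B *ᵥ ![1, 0, 0] = ![1, 0, 0]) :
    B = 1 ∨ B = sigma' := by
  obtain ⟨b1, b2, b3⟩ := hB
  have hT : B *ᵥ P8 0 ∈ Set.range P8 := by
    rw [← b2]; exact ⟨_, ⟨0, rfl⟩, rfl⟩
  obtain ⟨j, hj⟩ := hT
  have g0 := congrFun h 0
  have g1 := congrFun h 1
  have g2 := congrFun h 2
  simp [Matrix.mulVec, dotProduct, Fin.sum_univ_three] at g0 g1 g2
  have o : ∀ i j, (Bᵀ * B) i j = (1 : Matrix (Fin 3) (Fin 3) ℝ) i j := by rw [b1]; simp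
  have o01 := o 0 1
  have o02 := o 0 2
  have o11 := o 1 1
  have o12 := o 1 2
  have o22 := o 2 2
  simp [Matrix.mul_apply, Fin.sum_univ_three, g0, g1, g2] at o01 o02 o11 o12 o22
  have f0 := congrFun hj 0
  have f1 := congrFun hj 1
  have f2 := congrFun hj 2
  have ht := tau_pos
  have hs : 1 < Real.sqrt 2 := by
    rw [Real.lt_sqrt] <;> norm_num
  have hj0 : B 1 2 = 0 ∧ B 2 2 = 1 := by
    fin_cases j <;>
      simp [P8, Matrix.mulVec, dotProduct, Fin.sum_univ_three, g0, g1, g2, o02, ht.ne'] at f0 f1 f2 <;>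
      first
        | (constructor <;> linarith)
        | (exfalso; nlinarith)
  obtain ⟨q1, q2⟩ := hj0
  simp [q1, q2, o01] at o12
  simp [o01, o12] at o11
  have hb : B 1 1 = 1 ∨ B 1 1 = -1 := mul_self_eq_one_iff.mp o11
  rcases hb with hb | hb
  · left
    ext i j
    fin_cases i <;> fin_cases j <;> simp [*]
  · right
    unfold sigma'
    ext i j
    fin_cases i <;> fin_cases j <;> simp [*]

lemma image_e1 {A : Matrix (Fin 3) (Fin 3) ℝ} (hA : A ∈ symSet) :
    ∃ k : Fin 8, A *ᵥ ![1, 0, 0] = hvec k := by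
  obtain ⟨a1, a2, a3⟩ := hA
  have hT : A *ᵥ P8 1 ∈ Set.range P8 := by
    rw [← a2]; exact ⟨_, ⟨1, rfl⟩, rfl⟩
  have hS : A *ᵥ P10 1 ∈ Set.range P10 := by
    rw [← a3]; exact ⟨_, ⟨1, rfl⟩, rfl⟩
  have hd : (A *ᵥ P8 1) ⬝ᵥ (A *ᵥ P10 1) = 0 := by
    rw [Matrix.dotProduct_mulVec, ← Matrix.mulVec_transpose, Matrix.mulVec_mulVec, a1]
    simp [P8, P10]
  have hP : P10 1 = ![1, 0, 0] := by simp [P10]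
  obtain ⟨i, hi⟩ := hT
  obtain ⟨j, hj⟩ := hS
  rw [← hi, ← hj] at hd
  rw [← hP, ← hj]
  have ht := tau_pos.ne'
  have hno : ∀ j : Fin 10, (j = 0 ∨ j = 5) → P8 i ⬝ᵥ P10 j ≠ 0 := by
    rintro j (rfl | rfl) <;> fin_cases i <;> simp [P8, P10, ht]
  fin_cases j
  · exact absurd hd (hno 0 (by simp))
  · exact ⟨0, by simp [P10, hvec]⟩
  · exact ⟨6, by simp [P10, hvec]⟩
  · exact ⟨4, by simp [P10, hvec]⟩
  · exact ⟨2, by simp [P10, hvec]⟩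
  · exact absurd hd (hno 5 (by simp))
  · exact ⟨1, by simp [P10, hvec]⟩
  · exact ⟨7, by simp [P10, hvec]⟩
  · exact ⟨5, by simp [P10, hvec]⟩
  · exact ⟨3, by simp [P10, hvec]⟩

/-- The sixteen elements of the group. -/
noncomputable def elts (p : Fin 8 × Fin 2) : Matrix (Fin 3) (Fin 3) ℝ :=
  sigma2' ^ (p.1 : ℕ) * sigma' ^ (p.2 : ℕ)

lemma sigma_pow_e1 (e : Fin 2) : sigma' ^ (e : ℕ) *ᵥ ![1, 0, 0] = ![1, 0, 0] := by
  fin_cases e <;> (ext j; fin_cases j <;> simp [sigma'])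

lemma elts_inj : Function.Injective elts := by
  rintro ⟨k, e⟩ ⟨l, f⟩ h
  have h1 := congrArg (fun M => M *ᵥ ![1, 0, 0]) h
  simp only [elts, ← Matrix.mulVec_mulVec, sigma_pow_e1, pow_hvec] at h1
  have hk := hvec_inj h1
  subst hk
  simp only [elts] at h
  have h2 := congrArg (fun M => (sigma2' ^ (k : ℕ))ᵀ * M) h
  simp only [← Matrix.mul_assoc, (pow_mem_sym k).1, Matrix.one_mul] at h2
  have h3 := congrFun (congrFun h2 1) 1
  have : e = f := by
    fin_cases e <;> fin_cases f <;> first | rfl | (exfalso; norm_num [sigma'] at h3)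
  rw [this]

lemma symSet_sub : symSet ⊆ Set.range elts := by
  intro A hA
  obtain ⟨k, hk⟩ := image_e1 hA
  have hR := pow_mem_sym k
  have hB := mul_mem_sym (transpose_mem_sym hR) hA
  have hR' : sigma2' ^ (k : ℕ) * (sigma2' ^ (k : ℕ))ᵀ = 1 := mul_eq_one_comm.mp hR.1
  have hfix : ((sigma2' ^ (k : ℕ))ᵀ * A) *ᵥ ![1, 0, 0] = ![1, 0, 0] := by
    rw [← Matrix.mulVec_mulVec, hk, ← pow_hvec, Matrix.mulVec_mulVec, hR.1, Matrix.one_mulVec]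
  have hAeq : A = sigma2' ^ (k : ℕ) * ((sigma2' ^ (k : ℕ))ᵀ * A) := by
    rw [← Matrix.mul_assoc, hR', Matrix.one_mul]
  rcases fix_e1 hB hfix with h | h
  · exact ⟨(k, 0), by rw [hAeq, h]; simp [elts]⟩
  · exact ⟨(k, 1), by rw [hAeq, h]; simp [elts]⟩

lemma exists_gl {A : Matrix (Fin 3) (Fin 3) ℝ} (hA : A ∈ symSet) :
    ∃ g : GL (Fin 3) ℝ, (g : Matrix (Fin 3) (Fin 3) ℝ) = A :=
  ⟨⟨A, Aᵀ, mul_eq_one_comm.mp hA.1, hA.1⟩, rfl⟩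

lemma elts_mem_G (p : Fin 8 × Fin 2) :
    ∃ g ∈ G', (g : Matrix (Fin 3) (Fin 3) ℝ) = elts p := by
  obtain ⟨a, ha⟩ := exists_gl sigma2_mem
  obtain ⟨b, hb⟩ := exists_gl sigma_mem
  have ha' : a ∈ G' := Subgroup.subset_closure (by simp [ha])
  have hb' : b ∈ G' := Subgroup.subset_closure (by simp [hb])
  refine ⟨a ^ (p.1 : ℕ) * b ^ (p.2 : ℕ), ?_, ?_⟩
  · exact mul_mem (pow_mem ha' _) (pow_mem hb' _)
  · simp [elts, ha, hb]

lemma G_sub : (fun g : GL (Fin 3) ℝ => (↑g : Matrix (Fin 3) (Fin 3) ℝ)) ''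
      (G' : Set (GL (Fin 3) ℝ)) ⊆ symSet := by
  rintro _ ⟨g, hg, rfl⟩
  exact G_le hg

lemma range_sub : Set.range elts ⊆ (fun g : GL (Fin 3) ℝ => (↑g : Matrix (Fin 3) (Fin 3) ℝ)) ''
      (G' : Set (GL (Fin 3) ℝ)) := by
  rintro _ ⟨p, rfl⟩
  obtain ⟨g, hg, h⟩ := elts_mem_G p
  exact ⟨g, hg, h⟩

/-- The set of `3×3` real orthogonal matrices mapping `{T'_1,…,T'_4,T_5,…,T_8}` onto
itself and `{S_1,…,S_6,S_2',…,S_5'}` onto itself is exactly the group `G'` generated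
by `σ'₂` and `σ'`, and it has exactly `16` elements. -/
theorem stmt_9 :
    symSet = (fun g : GL (Fin 3) ℝ => (↑g : Matrix (Fin 3) (Fin 3) ℝ)) ''
      (G' : Set (GL (Fin 3) ℝ)) ∧
    Nat.card symSet = 16 := by
  refine ⟨(symSet_sub.trans range_sub).antisymm G_sub, ?_⟩
  have h : symSet = Set.range elts := symSet_sub.antisymm (range_sub.trans G_sub)
  rw [h, Nat.card_range_of_injective elts_inj]
  simp
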